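/- The linear map φ : WSym → ℬ defined on the basis by φ(M_π) = b_π is injective and is a morphism of bialgebras: φ(M_π · M_{π'}) = φ(M_π) ⋆ φ(M_{π'}) for all set partitions π, π'; (φ ⊗ φ)(Δ_WSym(M_π)) = Δ(φ(M_π)) for every set partition π; φ sends M_∅ to the empty B-diagram ε; and ε* ∘ φ equals the counit of WSym. Consequently the span ℬ¹₁ of {b_π : π a set partition} is a sub-bialgebra of ℬ isomorphic as a Hopf algebra to WSym. -/

import Mathlib

/-!
The edges of `b_π` join consecutive elements of the blocks of `π`. Hence the free outer
half-edges of `b_π` are the maxima of the blocks and the free inner ones are the minima, so that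
matchings of free half-edges of `b_π` and `b_π'` are the same as matchings of blocks of `π` and
`π'`: adding an edge from `max b` to `min (b' + n)` is precisely what merging `b` with the shifted
block `b' + n` does to consecutive elements, since every element of `b` is smaller than every
element of `b' + n`. This compares the products. For the coproducts, a set of vertices is closed
under passing to consecutive elements if and only if it is a union of blocks. The same closure
argument recovers the blocks from the edges, which makes `π ↦ b_π` injective.
-/

open scoped BigOperators

structure BD where
  lam : List ℕ
  up : Finset ℕ
  dn : Finset ℕ
  ed : Finset (ℕ × ℕ)
deriving DecidableEq

namespace BD

/-- number of vertices -/
def nv (G : BD) : ℕ := G.lam.length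

/-- number of half-edges -/
def omega (G : BD) : ℕ := G.lam.sum

/-- the vertex to which a half-edge belongs -/
def v (G : BD) (k : ℕ) : ℕ :=
  (List.range G.lam.length).countP (fun i => (G.lam.take i).sum < k)

def Valid (G : BD) : Prop :=
  (∀ x ∈ G.lam, 0 < x) ∧
  G.up ⊆ Finset.Icc 1 G.omega ∧
  G.dn ⊆ Finset.Icc 1 G.omega ∧
  (∀ p ∈ G.ed, p.1 ∈ G.up ∧ p.2 ∈ G.dn ∧ G.v p.1 < G.v p.2) ∧
  (∀ p ∈ G.ed, ∀ q ∈ G.ed, p.1 = q.1 → p = q) ∧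
  (∀ p ∈ G.ed, ∀ q ∈ G.ed, p.2 = q.2 → p = q)

def eps : BD := ⟨[], ∅, ∅, ∅⟩

theorem eps_valid : eps.Valid := by
  refine ⟨?_, ?_, ?_, ?_, ?_, ?_⟩ <;> simp [eps, Valid, omega]

def HfUp (G : BD) : Finset ℕ := G.up \ G.ed.image Prod.fst
def HfDn (G : BD) : Finset ℕ := G.dn \ G.ed.image Prod.snd
def hfUp (G : BD) : ℕ := G.HfUp.card
def hfDn (G : BD) : ℕ := G.HfDn.card
def hc (G : BD) : ℕ :=
  (G.omega - G.ed.card - G.hfUp) + (G.omega - G.ed.card - G.hfDn)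

/-- composition of `G'` over `G` along a matching `s` -/
def comp (G G' : BD) (s : Finset (ℕ × ℕ)) : BD where
  lam := G.lam ++ G'.lam
  up := G.up ∪ G'.up.image (· + G.omega)
  dn := G.dn ∪ G'.dn.image (· + G.omega)
  ed := G.ed ∪ s.image (fun p => (p.1, p.2 + G.omega)) ∪
        G'.ed.image (fun p => (p.1 + G.omega, p.2 + G.omega))

/-- `s` encodes a strictly increasing sequence `a₁ < ⋯ < a_k` of elements of `H_f↑(G)`
matched with pairwise distinct elements `b₁,…,b_k` of `H_f↓(G')`. -/
def Matching (G G' : BD) (s : Finset (ℕ × ℕ)) : Prop :=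
  (∀ p ∈ s, p.1 ∈ G.HfUp ∧ p.2 ∈ G'.HfDn) ∧
  (∀ p ∈ s, ∀ q ∈ s, p.1 = q.1 → p = q) ∧
  (∀ p ∈ s, ∀ q ∈ s, p.2 = q.2 → p = q)

open scoped Classical in
noncomputable def matchings (G G' : BD) : Finset (Finset (ℕ × ℕ)) :=
  (G.HfUp ×ˢ G'.HfDn).powerset.filter (fun s => Matching G G' s)

/-- juxtaposition -/
def juxt (G G' : BD) : BD := comp G G' ∅

def Indiv (G : BD) : Prop :=
  ∀ G₁ G₂ : BD, G₁.Valid → G₂.Valid → G = juxt G₁ G₂ → G₁ = G ∨ G₂ = G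

/-- half-edges attached to the vertices in `I` -/
def HI (G : BD) (I : Finset ℕ) : Finset ℕ :=
  (Finset.Icc 1 G.omega).filter (fun k => G.v k ∈ I)

/-- the increasing relabelling bijection -/
def phi (G : BD) (I : Finset ℕ) (k : ℕ) : ℕ := ((G.HI I).filter (· ≤ k)).card

/-- sub-B-diagram on the set of vertices `I` -/
def sub (G : BD) (I : Finset ℕ) : BD where
  lam := ((List.range G.lam.length).filter (fun i => i + 1 ∈ I)).map (fun i => G.lam.getD i 0)
  up := (G.up ∩ G.HI I).image (G.phi I)
  dn := (G.dn ∩ G.HI I).image (G.phi I)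
  ed := (G.ed.filter (fun p => G.v p.1 ∈ I ∧ G.v p.2 ∈ I)).image
          (fun p => (G.phi I p.1, G.phi I p.2))

def Isolated (G : BD) (I : Finset ℕ) : Prop :=
  ∀ p ∈ G.ed, (G.v p.1 ∈ I ↔ G.v p.2 ∈ I)

def Connected (G : BD) : Prop :=
  ∀ i j : ℕ, 1 ≤ i → i < j → j ≤ G.nv →
    ∃ (k : ℕ) (c : Fin (k + 1) → ℕ × ℕ),
      (∀ ℓ, c ℓ ∈ G.ed) ∧
      (i = G.v (c 0).1 ∨ i = G.v (c 0).2) ∧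
      (j = G.v (c (Fin.last k)).1 ∨ j = G.v (c (Fin.last k)).2) ∧
      ∀ ℓ : Fin k,
        G.v (c ℓ.castSucc).1 = G.v (c ℓ.succ).1 ∨ G.v (c ℓ.castSucc).1 = G.v (c ℓ.succ).2 ∨
        G.v (c ℓ.castSucc).2 = G.v (c ℓ.succ).1 ∨ G.v (c ℓ.castSucc).2 = G.v (c ℓ.succ).2

def IsConnComp (G : BD) (I : Finset ℕ) : Prop :=
  I ⊆ Finset.Icc 1 G.nv ∧ I.Nonempty ∧ (G.sub I).Connected ∧
  ∀ J : Finset ℕ, I ⊆ J → J ⊆ Finset.Icc 1 G.nv → (G.sub J).Connected → J = I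

end BD

open scoped TensorProduct

/-- B-diagrams -/
abbrev BDiagram := {G : BD // G.Valid}

/-- the free `ℂ`-vector space on the set of B-diagrams -/
abbrev BSpace := BDiagram →₀ ℂ

open scoped Classical in
noncomputable def mkB (G : BD) : BSpace :=
  if h : G.Valid then Finsupp.single ⟨G, h⟩ 1 else 0

noncomputable def unitB : BSpace := Finsupp.single ⟨BD.eps, BD.eps_valid⟩ 1

noncomputable def liftB {V : Type*} [AddCommMonoid V] [Module ℂ V] (f : BDiagram → V) :
    BSpace →ₗ[ℂ] V :=
  Finsupp.lsum ℂ fun A => LinearMap.toSpanSingleton ℂ V (f A)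

noncomputable def mulfun (A B : BDiagram) : BSpace :=
  ∑ s ∈ BD.matchings A.1 B.1, mkB (BD.comp A.1 B.1 s)

/-- the product ⋆ of the algebra of B-diagrams, as a bilinear map -/
noncomputable def starB : BSpace →ₗ[ℂ] BSpace →ₗ[ℂ] BSpace :=
  liftB fun A => liftB fun B => mulfun A B

open scoped Classical in
/-- the coproduct evaluated on a B-diagram -/
noncomputable def dfun (A : BDiagram) : BSpace ⊗[ℂ] BSpace :=
  ∑ I ∈ (Finset.Icc 1 A.1.nv).powerset.filter (fun I => A.1.Isolated I),
    mkB (A.1.sub I) ⊗ₜ[ℂ] mkB (A.1.sub (Finset.Icc 1 A.1.nv \ I))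

/-- the coproduct Δ of ℬ -/
noncomputable def deltaL : BSpace →ₗ[ℂ] BSpace ⊗[ℂ] BSpace := liftB dfun

/-- the counit of ℬ -/
noncomputable def counitB : BSpace →ₗ[ℂ] ℂ :=
  liftB fun A => if A.1 = BD.eps then (1 : ℂ) else 0

/-- set partitions of `{1,…,n}` for some `n` -/
def IsSP (π : Finset (Finset ℕ)) : Prop :=
  ∅ ∉ π ∧ (∀ b ∈ π, ∀ b' ∈ π, b ≠ b' → Disjoint b b') ∧
  ∃ n : ℕ, π.biUnion id = Finset.Icc 1 n

/-- the type of set partitions -/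
abbrev SP := {π : Finset (Finset ℕ) // IsSP π}

/-- the underlying space of `WSym`: the free ℂ-vector space on set partitions -/
abbrev WS := SP →₀ ℂ

theorem empty_isSP : IsSP ∅ :=
  ⟨by simp, by simp, 0, by rw [Finset.biUnion_empty]; exact (Finset.Icc_eq_empty (by norm_num)).symm⟩

/-- the integer `n` such that `π ⊨ n` -/
def spn (π : Finset (Finset ℕ)) : ℕ := (π.biUnion id).card

def shiftSP (n : ℕ) (π : Finset (Finset ℕ)) : Finset (Finset ℕ) :=
  π.image fun b => b.image (· + n)

/-- `π ⊎ π'` -/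
def uplusSP (π π' : Finset (Finset ℕ)) : Finset (Finset ℕ) := π ∪ shiftSP (spn π) π'

/-- indivisible set partitions -/
def IndivSP (π : Finset (Finset ℕ)) : Prop :=
  π ≠ ∅ ∧ ∀ π₁ π₂ : Finset (Finset ℕ), IsSP π₁ → IsSP π₂ → π = uplusSP π₁ π₂ →
    π₁ = π ∨ π₂ = π

/-- a partial matching between the blocks of `π` and those of `πs` -/
def MatchSP (π πs : Finset (Finset ℕ)) (m : Finset (Finset ℕ × Finset ℕ)) : Prop :=
  (∀ p ∈ m, p.1 ∈ π ∧ p.2 ∈ πs) ∧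
  (∀ p ∈ m, ∀ q ∈ m, (p.1 = q.1 ∨ p.2 = q.2) → p = q)

open scoped Classical in
noncomputable def matchingsSP (π πs : Finset (Finset ℕ)) :
    Finset (Finset (Finset ℕ × Finset ℕ)) :=
  (π ×ˢ πs).powerset.filter fun m => MatchSP π πs m

/-- merge the matched pairs of blocks -/
def mergeSP (π πs : Finset (Finset ℕ)) (m : Finset (Finset ℕ × Finset ℕ)) :
    Finset (Finset ℕ) :=
  ((π \ m.image Prod.fst) ∪ (πs \ m.image Prod.snd)) ∪ m.image fun p => p.1 ∪ p.2

open scoped Classical in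
noncomputable def mkSP (π : Finset (Finset ℕ)) : WS :=
  if h : IsSP π then Finsupp.single ⟨π, h⟩ 1 else 0

noncomputable def unitW : WS := Finsupp.single ⟨∅, empty_isSP⟩ 1

noncomputable def liftW {V : Type*} [AddCommMonoid V] [Module ℂ V] (f : SP → V) :
    WS →ₗ[ℂ] V :=
  Finsupp.lsum ℂ fun π => LinearMap.toSpanSingleton ℂ V (f π)

/-- `M_π · M_π'`: the sum over all ways of merging blocks of `π` with blocks of the
shifted `π'` along a partial matching -/
noncomputable def mulfunSP (π π' : SP) : WS :=
  ∑ m ∈ matchingsSP π.1 (shiftSP (spn π.1) π'.1),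
    mkSP (mergeSP π.1 (shiftSP (spn π.1) π'.1) m)

/-- the product of `WSym` -/
noncomputable def mulW : WS →ₗ[ℂ] WS →ₗ[ℂ] WS := liftW fun π => liftW fun π' => mulfunSP π π'

/-- standardization of a set of blocks -/
def stdSP (e : Finset (Finset ℕ)) : Finset (Finset ℕ) :=
  e.image fun b => b.image fun x => ((e.biUnion id).filter (· ≤ x)).card

open scoped Classical in
noncomputable def dfunSP (π : SP) : WS ⊗[ℂ] WS :=
  ∑ e ∈ π.1.powerset, mkSP (stdSP e) ⊗ₜ[ℂ] mkSP (stdSP (π.1 \ e))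

/-- the coproduct of `WSym` -/
noncomputable def deltaW : WS →ₗ[ℂ] WS ⊗[ℂ] WS := liftW dfunSP

/-- the counit of `WSym` -/
noncomputable def counitW : WS →ₗ[ℂ] ℂ := liftW fun π => if π.1 = ∅ then (1 : ℂ) else 0

open scoped Classical in
/-- the B-diagram `b_π` associated to a set partition `π` of `{1,…,n}`:
`n` vertices with one inner and one outer half-edge, with an edge `(i,j)` whenever
`i, j` lie in a common block `b` and `j = min{ℓ ∈ b : ℓ > i}`. -/
noncomputable def bofSP (π : Finset (Finset ℕ)) : BD :=
  ⟨List.replicate (π.biUnion id).card 1,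
   Finset.Icc 1 (π.biUnion id).card,
   Finset.Icc 1 (π.biUnion id).card,
   (Finset.Icc 1 (π.biUnion id).card ×ˢ Finset.Icc 1 (π.biUnion id).card).filter
     fun p => ∃ b ∈ π, p.1 ∈ b ∧ p.2 ∈ b ∧ (b.filter fun l => p.1 < l).min = (p.2 : WithTop ℕ)⟩

/-- the linear map `WSym → ℬ` sending `M_π` to `b_π` -/
noncomputable def phiW : WS →ₗ[ℂ] BSpace := liftW fun π => mkB (bofSP π.1)

/-- A partial matching between two finite sets, given by its set of matched pairs: no element
occurs in two different pairs. Both products are sums over such matchings. -/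
def IsPartialMatching {α β : Type*} (A : Finset α) (B : Finset β) (m : Finset (α × β)) : Prop :=
  m ⊆ A ×ˢ B ∧ ∀ p ∈ m, ∀ q ∈ m, p.1 = q.1 ↔ p.2 = q.2

open scoped Classical in
/-- The finite set of all partial matchings between two finite sets. -/
noncomputable def partialMatchings {α β : Type*} (A : Finset α) (B : Finset β) :
    Finset (Finset (α × β)) :=
  (A ×ˢ B).powerset.filter fun m => IsPartialMatching A B m

section PartialMatching

variable {α β γ δ : Type*} {A : Finset α} {B : Finset β} {A' : Finset γ} {B' : Finset δ}
  {f : α → γ} {g : β → δ}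

theorem mem_partialMatchings {m : Finset (α × β)} :
    m ∈ partialMatchings A B ↔ IsPartialMatching A B m := by
  classical
  rw [partialMatchings, Finset.mem_filter, Finset.mem_powerset, and_iff_right_iff_imp]
  exact fun hm => hm.1

theorem isPartialMatching_iff {m : Finset (α × β)} :
    IsPartialMatching A B m ↔ (∀ p ∈ m, p.1 ∈ A ∧ p.2 ∈ B) ∧
      (∀ p ∈ m, ∀ q ∈ m, p.1 = q.1 → p = q) ∧ ∀ p ∈ m, ∀ q ∈ m, p.2 = q.2 → p = q := by
  simp only [IsPartialMatching, Finset.subset_iff, Finset.mem_product, Prod.ext_iff]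
  grind

variable [DecidableEq γ] [DecidableEq δ]

theorem isPartialMatching_image_iff (hf : Set.BijOn f A A') (hg : Set.BijOn g B B')
    {m : Finset (α × β)} (hm : m ⊆ A ×ˢ B) :
    IsPartialMatching A' B' (m.image fun p => (f p.1, g p.2)) ↔ IsPartialMatching A B m := by
  have hmA (p) (hp : p ∈ m) : p.1 ∈ A := (Finset.mem_product.1 (hm hp)).1
  have hmB (p) (hp : p ∈ m) : p.2 ∈ B := (Finset.mem_product.1 (hm hp)).2
  have hsub : (m.image fun p => (f p.1, g p.2)) ⊆ A' ×ˢ B' :=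
    Finset.image_subset_iff.2 fun p hp =>
      Finset.mem_product.2 ⟨hf.mapsTo (hmA p hp), hg.mapsTo (hmB p hp)⟩
  simp only [IsPartialMatching, hsub, hm, true_and, Finset.forall_mem_image]
  refine forall₄_congr fun p hp q hq => ?_
  rw [hf.injOn.eq_iff (hmA p hp) (hmA q hq), hg.injOn.eq_iff (hmB p hp) (hmB q hq)]

theorem sum_partialMatchings_of_bijOn {M : Type*} [AddCommMonoid M] (hf : Set.BijOn f A A')
    (hg : Set.BijOn g B B') (F : Finset (γ × δ) → M) :
    ∑ s ∈ partialMatchings A' B', F s =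
      ∑ m ∈ partialMatchings A B, F (m.image fun p => (f p.1, g p.2)) := by
  have hfg : Set.BijOn (fun p : α × β => (f p.1, g p.2)) (A ×ˢ B : Finset (α × β))
      (A' ×ˢ B' : Finset (γ × δ)) := by
    simpa only [Finset.coe_product] using hf.prodMap hg
  refine (Finset.sum_nbij (Finset.image fun p : α × β => (f p.1, g p.2)) (fun m hm => ?_) ?_ ?_
    fun _ _ => rfl).symm
  · have hm := mem_partialMatchings.1 hm
    exact mem_partialMatchings.2 ((isPartialMatching_image_iff hf hg hm.1).2 hm)
  · exact (Finset.image_injOn_powerset_of_injOn hfg.injOn).mono fun m hm =>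
      Finset.mem_coe.2 (Finset.mem_powerset.2 (mem_partialMatchings.1 hm).1)
  · intro s hs
    have hs := mem_partialMatchings.1 hs
    obtain ⟨m, hm, rfl⟩ := Finset.subset_set_image_iff.1
      ((Finset.coe_subset.2 hs.1).trans hfg.surjOn)
    exact ⟨m, mem_partialMatchings.2 ((isPartialMatching_image_iff hf hg hm).1 hs), rfl⟩

end PartialMatching

/-- `j` is the immediate successor of `i` inside the finite set `b`: the edges of `b_π` are the
pairs of consecutive elements of the blocks of `π`. -/
def IsNext {α : Type*} [LinearOrder α] (b : Finset α) (i j : α) : Prop :=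
  i ∈ b ∧ j ∈ b ∧ i < j ∧ ∀ l ∈ b, i < l → j ≤ l

section IsNext

variable {α β : Type*} [LinearOrder α] [LinearOrder β] {b c : Finset α} {i j k : α}

theorem IsNext.unique_right (hj : IsNext b i j) (hk : IsNext b i k) : j = k :=
  le_antisymm (hj.2.2.2 k hk.2.1 hk.2.2.1) (hk.2.2.2 j hj.2.1 hj.2.2.1)

theorem IsNext.unique_left (hi : IsNext b i k) (hj : IsNext b j k) : i = j :=
  le_antisymm (not_lt.1 fun hlt => (hj.2.2.2 i hi.1 hlt).not_gt hi.2.2.1)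
    (not_lt.1 fun hlt => (hi.2.2.2 j hj.1 hlt).not_gt hj.2.2.1)

theorem isNext_iff_covBy (hi : i ∈ b) (hj : j ∈ b) :
    IsNext b i j ↔ (⟨i, hi⟩ : b) ⋖ ⟨j, hj⟩ := by
  simp [IsNext, CovBy, hi, hj]

theorem min_eq_coe_iff_isLeast : b.min = i ↔ IsLeast (b : Set α) i :=
  ⟨fun h => ⟨Finset.mem_of_min h, fun _ hx => Finset.min_le_of_eq hx h⟩, fun h =>
    le_antisymm (Finset.min_le h.1) (Finset.le_min fun _ hx => WithTop.coe_le_coe.2 (h.2 hx))⟩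

theorem isNext_iff_min_filter_lt :
    IsNext b i j ↔ i ∈ b ∧ j ∈ b ∧ (b.filter fun l => i < l).min = (j : WithTop α) := by
  simp only [min_eq_coe_iff_isLeast, IsNext, IsLeast, mem_lowerBounds, Finset.mem_coe,
    Finset.mem_filter, and_imp]
  tauto

theorem isGreatest_iff_forall_not_isNext (hi : i ∈ b) :
    IsGreatest (b : Set α) i ↔ ∀ j, ¬ IsNext b i j := by
  refine ⟨fun hmax j hij => (hmax.2 hij.2.1).not_gt hij.2.2.1, fun h => ⟨hi, fun l hl => ?_⟩⟩
  by_contra! hil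
  obtain ⟨hmem, hleast⟩ := (b.filter (i < ·)).isLeast_min' ⟨l, Finset.mem_filter.2 ⟨hl, hil⟩⟩
  rw [Finset.mem_coe, Finset.mem_filter] at hmem
  exact h _ ⟨hi, hmem.1, hmem.2, fun m hm him => hleast (by simp [hm, him])⟩

theorem isLeast_iff_forall_not_isNext (hj : j ∈ b) :
    IsLeast (b : Set α) j ↔ ∀ i, ¬ IsNext b i j := by
  refine ⟨fun hmin i hij => (hmin.2 hij.1).not_gt hij.2.2.1, fun h => ⟨hj, fun l hl => ?_⟩⟩
  by_contra! hlj
  obtain ⟨hmem, hgreatest⟩ := (b.filter (· < j)).isGreatest_max' ⟨l, Finset.mem_filter.2 ⟨hl, hlj⟩⟩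
  rw [Finset.mem_coe, Finset.mem_filter] at hmem
  exact h _ ⟨hmem.1, hj, hmem.2, fun m hm hlt =>
    not_lt.1 fun hmj => (hgreatest (by simp [hm, hmj])).not_gt hlt⟩

theorem isNext_image_iff {f : α → β} (hf : StrictMonoOn f b) {i j : β} :
    IsNext (b.image f) i j ↔ Relation.Map (IsNext b) f f i j := by
  constructor
  · rintro ⟨hi, hj, hij, hleast⟩
    obtain ⟨x, hx, rfl⟩ := Finset.mem_image.1 hi
    obtain ⟨y, hy, rfl⟩ := Finset.mem_image.1 hj
    exact ⟨x, y, ⟨hx, hy, (hf.lt_iff_lt hx hy).1 hij, fun l hl hxl => (hf.le_iff_le hy hl).1 <|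
      hleast _ (Finset.mem_image_of_mem f hl) (hf hx hl hxl)⟩, rfl, rfl⟩
  · rintro ⟨x, y, ⟨hx, hy, hxy, hleast⟩, rfl, rfl⟩
    refine ⟨Finset.mem_image_of_mem f hx, Finset.mem_image_of_mem f hy, hf hx hy hxy, ?_⟩
    simp only [Finset.forall_mem_image]
    exact fun l hl hlt => (hf.le_iff_le hy hl).2 (hleast l hl ((hf.lt_iff_lt hx hl).1 hlt))

theorem isNext_union_iff (hbc : ∀ x ∈ b, ∀ y ∈ c, x < y) :
    IsNext (b ∪ c) i j ↔
      IsNext b i j ∨ (IsGreatest (b : Set α) i ∧ IsLeast (c : Set α) j) ∨ IsNext c i j := by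
  simp only [IsNext, IsGreatest, IsLeast, mem_upperBounds, mem_lowerBounds, Finset.mem_union,
    Finset.mem_coe]
  constructor <;> grind

theorem reflTransGen_isNext (hi : i ∈ b) (hj : j ∈ b) (hij : i ≤ j) :
    Relation.ReflTransGen (IsNext b) i j :=
  letI : LocallyFiniteOrder b := Fintype.toLocallyFiniteOrder
  (le_iff_reflTransGen_covBy.1 (show (⟨i, hi⟩ : b) ≤ ⟨j, hj⟩ from hij)).lift Subtype.val
    fun x y => (isNext_iff_covBy x.2 y.2).2

theorem mem_of_forall_isNext {I : Set α} (hI : ∀ x y, IsNext b x y → (x ∈ I ↔ y ∈ I))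
    (hi : i ∈ b) (hj : j ∈ b) (hiI : i ∈ I) : j ∈ I := by
  have chain {x y} (h : Relation.ReflTransGen (IsNext b) x y) : x ∈ I ↔ y ∈ I := by
    induction h with
    | refl => rfl
    | tail _ hnext ih => exact ih.trans (hI _ _ hnext)
  rcases le_total i j with hij | hji
  · exact (chain (reflTransGen_isNext hi hj hij)).1 hiI
  · exact (chain (reflTransGen_isNext hj hi hji)).2 hiI

end IsNext

theorem isGreatest_sSup_coe {α : Type*} [ConditionallyCompleteLinearOrder α] {b : Finset α}
    (hb : b.Nonempty) : IsGreatest (b : Set α) (sSup b) :=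
  ⟨hb.csSup_mem, fun _ hx => le_csSup b.bddAbove hx⟩

theorem isLeast_sInf_coe {α : Type*} [ConditionallyCompleteLinearOrder α] {b : Finset α}
    (hb : b.Nonempty) : IsLeast (b : Set α) (sInf b) :=
  isGreatest_sSup_coe (α := αᵒᵈ) hb

/-- The relation "`j` is the immediate successor of `i` in some block of the family `P`"; for a
set partition these pairs are the edges of its B-diagram. -/
def Follows {α : Type*} [LinearOrder α] (P : Finset (Finset α)) (i j : α) : Prop :=
  ∃ b ∈ P, IsNext b i j

section Follows

variable {α β : Type*} [LinearOrder α] [LinearOrder β] {P Q : Finset (Finset α)} {b : Finset α}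
  {i j k : α}

theorem Follows.unique_right (hP : (P : Set (Finset α)).PairwiseDisjoint id)
    (hj : Follows P i j) (hk : Follows P i k) : j = k := by
  obtain ⟨b, hb, hj⟩ := hj
  obtain ⟨c, hc, hk⟩ := hk
  obtain rfl := hP.elim_finset hb hc i hj.1 hk.1
  exact hj.unique_right hk

theorem Follows.unique_left (hP : (P : Set (Finset α)).PairwiseDisjoint id)
    (hi : Follows P i k) (hj : Follows P j k) : i = j := by
  obtain ⟨b, hb, hi⟩ := hi
  obtain ⟨c, hc, hj⟩ := hj
  obtain rfl := hP.elim_finset hb hc k hi.2.1 hj.2.1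
  exact hi.unique_left hj

theorem Follows.mem_iff_mem (hP : (P : Set (Finset α)).PairwiseDisjoint id)
    (hij : Follows P i j) (hb : b ∈ P) : i ∈ b ↔ j ∈ b := by
  obtain ⟨c, hc, hij⟩ := hij
  constructor
  · intro hi
    rw [hP.elim_finset hb hc i hi hij.1]
    exact hij.2.1
  · intro hj
    rw [hP.elim_finset hb hc j hj hij.2.1]
    exact hij.1

theorem Follows.mem_biUnion (hij : Follows P i j) : i ∈ P.biUnion id ∧ j ∈ P.biUnion id := by
  obtain ⟨b, hb, hij⟩ := hij
  exact ⟨Finset.mem_biUnion.2 ⟨b, hb, hij.1⟩, Finset.mem_biUnion.2 ⟨b, hb, hij.2.1⟩⟩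

theorem exists_isGreatest_iff_forall_not_follows
    (hP : (P : Set (Finset α)).PairwiseDisjoint id) :
    (∃ b ∈ P, IsGreatest (b : Set α) i) ↔ i ∈ P.biUnion id ∧ ∀ j, ¬ Follows P i j := by
  constructor
  · rintro ⟨b, hb, hi⟩
    refine ⟨Finset.mem_biUnion.2 ⟨b, hb, hi.1⟩, ?_⟩
    rintro j ⟨c, hc, hij⟩
    obtain rfl := hP.elim_finset hb hc i hi.1 hij.1
    exact (isGreatest_iff_forall_not_isNext hi.1).1 hi j hij
  · rintro ⟨hi, hnot⟩
    obtain ⟨b, hb, hib⟩ := Finset.mem_biUnion.1 hi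
    exact ⟨b, hb, (isGreatest_iff_forall_not_isNext hib).2 fun j hij => hnot j ⟨b, hb, hij⟩⟩

theorem exists_isLeast_iff_forall_not_follows
    (hP : (P : Set (Finset α)).PairwiseDisjoint id) :
    (∃ b ∈ P, IsLeast (b : Set α) j) ↔ j ∈ P.biUnion id ∧ ∀ i, ¬ Follows P i j := by
  constructor
  · rintro ⟨b, hb, hj⟩
    refine ⟨Finset.mem_biUnion.2 ⟨b, hb, hj.1⟩, ?_⟩
    rintro i ⟨c, hc, hij⟩
    obtain rfl := hP.elim_finset hb hc j hj.1 hij.2.1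
    exact (isLeast_iff_forall_not_isNext hj.1).1 hj i hij
  · rintro ⟨hj, hnot⟩
    obtain ⟨b, hb, hjb⟩ := Finset.mem_biUnion.1 hj
    exact ⟨b, hb, (isLeast_iff_forall_not_isNext hjb).2 fun i hij => hnot i ⟨b, hb, hij⟩⟩

theorem follows_image_iff {f : α → β} (hf : StrictMonoOn f (P.biUnion id)) {i j : β} :
    Follows (P.image (Finset.image f)) i j ↔ Relation.Map (Follows P) f f i j := by
  have hblock {b} (hb : b ∈ P) : StrictMonoOn f b :=
    hf.mono (Finset.coe_subset.2 (Finset.subset_biUnion_of_mem id hb))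
  simp only [Follows, Finset.exists_mem_image]
  constructor
  · rintro ⟨b, hb, hij⟩
    obtain ⟨x, y, hxy, rfl, rfl⟩ := (isNext_image_iff (hblock hb)).1 hij
    exact ⟨x, y, ⟨b, hb, hxy⟩, rfl, rfl⟩
  · rintro ⟨x, y, ⟨b, hb, hxy⟩, rfl, rfl⟩
    exact ⟨b, hb, (isNext_image_iff (hblock hb)).2 ⟨x, y, hxy, rfl, rfl⟩⟩

theorem follows_iff_of_subset (hP : (P : Set (Finset α)).PairwiseDisjoint id) (hQ : Q ⊆ P) :
    Follows Q i j ↔ Follows P i j ∧ i ∈ Q.biUnion id ∧ j ∈ Q.biUnion id := by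
  refine ⟨fun h => ⟨h.imp fun b hb => ⟨hQ hb.1, hb.2⟩, h.mem_biUnion⟩, ?_⟩
  rintro ⟨⟨b, hb, hij⟩, hi, -⟩
  obtain ⟨c, hc, hic⟩ := Finset.mem_biUnion.1 hi
  obtain rfl := hP.elim_finset hb (hQ hc) i hij.1 hic
  exact ⟨b, hc, hij⟩

theorem subset_of_isNext_imp_follows (hP : (P : Set (Finset α)).PairwiseDisjoint id)
    (hb : b ∈ P) {c : Finset α} (hc : ∀ x y, IsNext c x y → Follows P x y) (hib : i ∈ b)
    (hic : i ∈ c) : c ⊆ b := fun _ hy =>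
  mem_of_forall_isNext (I := (b : Set α)) (fun x y hxy => (hc x y hxy).mem_iff_mem hP hb) hic hy hib

theorem subset_of_forall_follows_iff (hP : (P : Set (Finset α)).PairwiseDisjoint id)
    (hQ : (Q : Set (Finset α)).PairwiseDisjoint id) (hP₀ : ∅ ∉ P)
    (hunion : P.biUnion id ⊆ Q.biUnion id) (h : ∀ i j, Follows P i j ↔ Follows Q i j) :
    P ⊆ Q := by
  intro b hb
  obtain ⟨x, hxb⟩ := Finset.nonempty_iff_ne_empty.2 (ne_of_mem_of_not_mem hb hP₀)
  obtain ⟨c, hc, hxc⟩ := Finset.mem_biUnion.1 (hunion (Finset.mem_biUnion.2 ⟨b, hb, hxb⟩))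
  have hbc : b ⊆ c := subset_of_isNext_imp_follows hQ hc
    (fun i j hij => (h i j).1 ⟨b, hb, hij⟩) hxc hxb
  have hcb : c ⊆ b := subset_of_isNext_imp_follows hP hb
    (fun i j hij => (h i j).2 ⟨c, hc, hij⟩) hxb hxc
  rwa [hbc.antisymm hcb]

theorem eq_of_forall_follows_iff (hP : (P : Set (Finset α)).PairwiseDisjoint id)
    (hQ : (Q : Set (Finset α)).PairwiseDisjoint id) (hP₀ : ∅ ∉ P) (hQ₀ : ∅ ∉ Q)
    (hunion : P.biUnion id = Q.biUnion id) (h : ∀ i j, Follows P i j ↔ Follows Q i j) :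
    P = Q :=
  (subset_of_forall_follows_iff hP hQ hP₀ hunion.subset h).antisymm
    (subset_of_forall_follows_iff hQ hP hQ₀ hunion.symm.subset fun i j => (h i j).symm)

theorem exists_biUnion_eq_iff (hP : (P : Set (Finset α)).PairwiseDisjoint id) {I : Finset α} :
    (∃ e ⊆ P, e.biUnion id = I) ↔
      I ⊆ P.biUnion id ∧ ∀ i j, Follows P i j → (i ∈ I ↔ j ∈ I) := by
  constructor
  · rintro ⟨e, he, rfl⟩
    refine ⟨Finset.biUnion_subset_biUnion_of_subset_left _ he, fun i j hij => ?_⟩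
    simp only [Finset.mem_biUnion, id]
    exact exists_congr fun b => and_congr_right fun hb => hij.mem_iff_mem hP (he hb)
  · rintro ⟨hI, hclosed⟩
    refine ⟨P.filter (· ⊆ I), Finset.filter_subset _ _, Finset.Subset.antisymm ?_ fun x hx => ?_⟩
    · exact Finset.biUnion_subset.2 fun b hb => (Finset.mem_filter.1 hb).2
    · obtain ⟨b, hb, hxb⟩ := Finset.mem_biUnion.1 (hI hx)
      have hbI : b ⊆ I := fun y hy => mem_of_forall_isNext (I := (I : Set α))
        (fun i j hij => hclosed i j ⟨b, hb, hij⟩) hxb hy hx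
      exact Finset.mem_biUnion.2 ⟨b, Finset.mem_filter.2 ⟨hb, hbI⟩, hxb⟩

end Follows

section BlockFamily

variable {α β : Type*} [DecidableEq β] {P e : Finset (Finset α)} {f : α → β}

theorem empty_notMem_image_image (hP₀ : ∅ ∉ P) : ∅ ∉ P.image (Finset.image f) := by
  simpa using hP₀

variable [DecidableEq α]

theorem biUnion_id_sdiff (hP : (P : Set (Finset α)).PairwiseDisjoint id) (he : e ⊆ P) :
    (P \ e).biUnion id = P.biUnion id \ e.biUnion id := by
  have hunion : (P \ e).biUnion id ∪ e.biUnion id = P.biUnion id := by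
    rw [← Finset.union_biUnion, Finset.sdiff_union_of_subset he]
  have hdisj : Disjoint ((P \ e).biUnion id) (e.biUnion id) := by
    simp only [Finset.disjoint_biUnion_left, Finset.disjoint_biUnion_right, Finset.mem_sdiff]
    exact fun c hc b hb => hP hb.1 (he hc) (ne_of_mem_of_not_mem hc hb.2).symm
  rw [← hunion, Finset.union_sdiff_cancel_right hdisj]

theorem injOn_biUnion_id_powerset (hP : (P : Set (Finset α)).PairwiseDisjoint id) (hP₀ : ∅ ∉ P) :
    Set.InjOn (fun e : Finset (Finset α) => e.biUnion id) P.powerset := by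
  have hsub {e e' : Finset (Finset α)} (he : e ⊆ P) (he' : e' ⊆ P)
      (h : e.biUnion id ⊆ e'.biUnion id) : e ⊆ e' := by
    intro b hb
    obtain ⟨x, hxb⟩ := Finset.nonempty_iff_ne_empty.2 (ne_of_mem_of_not_mem (he hb) hP₀)
    obtain ⟨c, hc, hxc⟩ := Finset.mem_biUnion.1 (h (Finset.mem_biUnion.2 ⟨b, hb, hxb⟩))
    rwa [hP.elim_finset (he hb) (he' hc) x hxb hxc]
  intro e he e' he' h
  rw [Finset.mem_coe, Finset.mem_powerset] at he he'
  exact (hsub he he' h.le).antisymm (hsub he' he h.ge)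

theorem biUnion_id_image_image :
    (P.image (Finset.image f)).biUnion id = (P.biUnion id).image f := by
  rw [Finset.image_biUnion, Finset.biUnion_image]; rfl

theorem pairwiseDisjoint_image_image (hP : (P : Set (Finset α)).PairwiseDisjoint id)
    (hf : Set.InjOn f (P.biUnion id)) :
    (P.image (Finset.image f) : Set (Finset β)).PairwiseDisjoint id := by
  rw [Finset.coe_image]
  rintro _ ⟨b, hb, rfl⟩ _ ⟨c, hc, rfl⟩ hbc
  refine Finset.disjoint_left.2 fun y hyb hyc => hbc ?_
  obtain ⟨x, hxb, rfl⟩ := Finset.mem_image.1 hyb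
  obtain ⟨z, hzc, hzx⟩ := Finset.mem_image.1 hyc
  obtain rfl := hf (Finset.mem_biUnion.2 ⟨c, hc, hzc⟩) (Finset.mem_biUnion.2 ⟨b, hb, hxb⟩) hzx
  rw [hP.elim_finset hb hc z hxb hzc]

end BlockFamily

/-- The rank of `x` among the elements of `U`, counted from `1`. Both the standardization of set
partitions and the relabelling of half-edges in sub-B-diagrams are instances of it. -/
def rankIn {α : Type*} [LinearOrder α] (U : Finset α) (x : α) : ℕ := (U.filter (· ≤ x)).card

section Rank

variable {α : Type*} [LinearOrder α] (U : Finset α)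

theorem strictMonoOn_rankIn : StrictMonoOn (rankIn U) U := fun x _ y hy hxy =>
  Finset.card_lt_card <| Finset.ssubset_iff_of_subset
    (Finset.monotone_filter_right U fun _ _ hz => hz.trans hxy.le) |>.2
    ⟨y, by simpa using hy, by simp [hxy]⟩

theorem image_rankIn : U.image (rankIn U) = Finset.Icc 1 U.card := by
  refine Finset.eq_of_subset_of_card_le (Finset.image_subset_iff.2 fun x hx => ?_) ?_
  · exact Finset.mem_Icc.2 ⟨Finset.card_pos.2 ⟨x, by simpa using hx⟩, Finset.card_filter_le _ _⟩
  · rw [Finset.card_image_of_injOn (strictMonoOn_rankIn U).injOn, Nat.card_Icc,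
      Nat.add_sub_cancel]

end Rank

section SetPartition

variable {π e : Finset (Finset ℕ)} {n : ℕ}

theorem spn_eq_of_biUnion_eq (h : π.biUnion id = Finset.Icc 1 n) : spn π = n := by
  rw [spn, h, Nat.card_Icc, Nat.add_sub_cancel]

theorem IsSP.pairwiseDisjoint (h : IsSP π) : (π : Set (Finset ℕ)).PairwiseDisjoint id :=
  fun b hb c hc => h.2.1 b hb c hc

theorem IsSP.biUnion_eq (h : IsSP π) : π.biUnion id = Finset.Icc 1 (spn π) := by
  obtain ⟨n, hn⟩ := h.2.2
  rw [hn, spn_eq_of_biUnion_eq hn]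

theorem IsSP.nonempty_of_mem (h : IsSP π) {b : Finset ℕ} (hb : b ∈ π) : b.Nonempty :=
  Finset.nonempty_iff_ne_empty.2 (ne_of_mem_of_not_mem hb h.1)

theorem biUnion_stdSP (e : Finset (Finset ℕ)) :
    (stdSP e).biUnion id = Finset.Icc 1 (e.biUnion id).card :=
  biUnion_id_image_image.trans (image_rankIn _)

theorem spn_stdSP (e : Finset (Finset ℕ)) : spn (stdSP e) = (e.biUnion id).card :=
  spn_eq_of_biUnion_eq (biUnion_stdSP e)

theorem isSP_stdSP (he : (e : Set (Finset ℕ)).PairwiseDisjoint id) (he₀ : ∅ ∉ e) :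
    IsSP (stdSP e) :=
  ⟨empty_notMem_image_image he₀,
    fun _ hb _ hc => pairwiseDisjoint_image_image he (strictMonoOn_rankIn _).injOn hb hc,
    _, biUnion_stdSP e⟩

theorem IsSP.biUnion_shiftSP (h : IsSP π) :
    (shiftSP n π).biUnion id = Finset.Icc (n + 1) (n + spn π) := by
  rw [shiftSP]
  refine biUnion_id_image_image.trans ?_
  rw [h.biUnion_eq, Finset.image_add_right_Icc, add_comm 1, add_comm (spn π)]

end SetPartition

section Merge

variable {π σ : Finset (Finset ℕ)} {m : Finset (Finset ℕ × Finset ℕ)} {b : Finset ℕ} {i j : ℕ}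

theorem matchingsSP_eq (π σ : Finset (Finset ℕ)) : matchingsSP π σ = partialMatchings π σ := by
  classical
  ext m
  rw [matchingsSP, Finset.mem_filter, Finset.mem_powerset, mem_partialMatchings,
    and_iff_right_of_imp fun hm p hp => Finset.mem_product.2 (hm.1 p hp), isPartialMatching_iff]
  simp only [MatchSP, or_imp, forall_and]

theorem mem_mergeSP : b ∈ mergeSP π σ m ↔
    (b ∈ π ∧ ∀ p ∈ m, p.1 ≠ b) ∨ (b ∈ σ ∧ ∀ p ∈ m, p.2 ≠ b) ∨ ∃ p ∈ m, p.1 ∪ p.2 = b := by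
  simp only [mergeSP, Finset.mem_union, Finset.mem_sdiff, Finset.mem_image, not_exists, not_and,
    or_assoc, ne_eq]

theorem biUnion_mergeSP (hm : m ⊆ π ×ˢ σ) :
    (mergeSP π σ m).biUnion id = π.biUnion id ∪ σ.biUnion id := by
  have hfst : m.image Prod.fst ⊆ π :=
    Finset.image_subset_iff.2 fun p hp => (Finset.mem_product.1 (hm hp)).1
  have hsnd : m.image Prod.snd ⊆ σ :=
    Finset.image_subset_iff.2 fun p hp => (Finset.mem_product.1 (hm hp)).2
  have hmerged : (m.image fun p => p.1 ∪ p.2).biUnion id =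
      (m.image Prod.fst).biUnion id ∪ (m.image Prod.snd).biUnion id := by
    simp only [← Finset.sup_eq_biUnion, Finset.sup_image, Function.id_comp]
    exact Finset.sup_sup
  calc (mergeSP π σ m).biUnion id
      = ((π \ m.image Prod.fst).biUnion id ∪ (m.image Prod.fst).biUnion id) ∪
          ((σ \ m.image Prod.snd).biUnion id ∪ (m.image Prod.snd).biUnion id) := by
        rw [mergeSP, Finset.union_biUnion, Finset.union_biUnion, hmerged,
          Finset.union_union_union_comm]
    _ = π.biUnion id ∪ σ.biUnion id := by
        rw [← Finset.union_biUnion, ← Finset.union_biUnion, Finset.sdiff_union_of_subset hfst,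
          Finset.sdiff_union_of_subset hsnd]

theorem empty_notMem_mergeSP (hπ : ∅ ∉ π) (hσ : ∅ ∉ σ) (hm : m ⊆ π ×ˢ σ) :
    ∅ ∉ mergeSP π σ m := by
  rw [mem_mergeSP]
  rintro (⟨h, -⟩ | ⟨h, -⟩ | ⟨p, hp, h⟩)
  · exact hπ h
  · exact hσ h
  · rw [Finset.union_eq_empty] at h
    exact hπ (h.1 ▸ (Finset.mem_product.1 (hm hp)).1)

theorem pairwiseDisjoint_mergeSP (hπ : (π : Set (Finset ℕ)).PairwiseDisjoint id)
    (hσ : (σ : Set (Finset ℕ)).PairwiseDisjoint id)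
    (hπσ : Disjoint (π.biUnion id) (σ.biUnion id)) (hm : IsPartialMatching π σ m) :
    (mergeSP π σ m : Set (Finset ℕ)).PairwiseDisjoint id := by
  have hcross {b c} (hb : b ∈ π) (hc : c ∈ σ) : Disjoint b c :=
    Finset.disjoint_of_subset_left (Finset.subset_biUnion_of_mem id hb)
      (Finset.disjoint_of_subset_right (Finset.subset_biUnion_of_mem id hc) hπσ)
  have hfst {p} (hp : p ∈ m) : p.1 ∈ π := (Finset.mem_product.1 (hm.1 hp)).1
  have hsnd {p} (hp : p ∈ m) : p.2 ∈ σ := (Finset.mem_product.1 (hm.1 hp)).2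
  simp only [mergeSP, Finset.coe_union, Set.pairwiseDisjoint_union]
  refine ⟨⟨hπ.subset (by simp), hσ.subset (by simp), ?_⟩, ?_, ?_⟩
  · intro b hb c hc _
    exact hcross (Finset.mem_sdiff.1 hb).1 (Finset.mem_sdiff.1 hc).1
  · rw [Finset.coe_image]
    rintro _ ⟨p, hp, rfl⟩ _ ⟨q, hq, rfl⟩ hpq
    have hpq₁ : p.1 ≠ q.1 := fun h => hpq (by simp only [h, (hm.2 p hp q hq).1 h])
    have hpq₂ : p.2 ≠ q.2 := mt (hm.2 p hp q hq).2 hpq₁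
    exact Finset.disjoint_union_left.2
      ⟨Finset.disjoint_union_right.2 ⟨hπ (hfst hp) (hfst hq) hpq₁, hcross (hfst hp) (hsnd hq)⟩,
        Finset.disjoint_union_right.2
          ⟨(hcross (hfst hq) (hsnd hp)).symm, hσ (hsnd hp) (hsnd hq) hpq₂⟩⟩
  · intro b hb c hc _
    obtain ⟨p, hp, rfl⟩ := Finset.mem_image.1 hc
    refine Finset.disjoint_union_right.2 ?_
    rcases hb with hb | hb
    · have hb := Finset.mem_sdiff.1 hb
      exact ⟨hπ hb.1 (hfst hp) fun h => hb.2 (h ▸ Finset.mem_image_of_mem _ hp),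
        hcross hb.1 (hsnd hp)⟩
    · have hb := Finset.mem_sdiff.1 hb
      exact ⟨(hcross (hfst hp) hb.1).symm,
        hσ hb.1 (hsnd hp) fun h => hb.2 (h ▸ Finset.mem_image_of_mem _ hp)⟩

theorem follows_mergeSP_iff (hπσ : ∀ x ∈ π.biUnion id, ∀ y ∈ σ.biUnion id, x < y)
    (hm : m ⊆ π ×ˢ σ) : Follows (mergeSP π σ m) i j ↔
      Follows π i j ∨ (∃ p ∈ m, IsGreatest (p.1 : Set ℕ) i ∧ IsLeast (p.2 : Set ℕ) j) ∨
        Follows σ i j := by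
  have hblocks (p) (hp : p ∈ m) : ∀ x ∈ p.1, ∀ y ∈ p.2, x < y := fun x hx y hy =>
    hπσ x (Finset.mem_biUnion.2 ⟨p.1, (Finset.mem_product.1 (hm hp)).1, hx⟩)
      y (Finset.mem_biUnion.2 ⟨p.2, (Finset.mem_product.1 (hm hp)).2, hy⟩)
  constructor
  · rintro ⟨b, hb, hij⟩
    obtain ⟨hb, -⟩ | ⟨hb, -⟩ | ⟨p, hp, rfl⟩ := mem_mergeSP.1 hb
    · exact .inl ⟨b, hb, hij⟩
    · exact .inr (.inr ⟨b, hb, hij⟩)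
    · obtain ⟨hp₁, hp₂⟩ := Finset.mem_product.1 (hm hp)
      exact ((isNext_union_iff (hblocks p hp)).1 hij).imp (fun h => ⟨p.1, hp₁, h⟩)
        (Or.imp (fun h => ⟨p, hp, h⟩) fun h => ⟨p.2, hp₂, h⟩)
  · have hmerged {p} (hp : p ∈ m) (h : IsNext (p.1 ∪ p.2) i j) : Follows (mergeSP π σ m) i j :=
      ⟨_, mem_mergeSP.2 (.inr (.inr ⟨p, hp, rfl⟩)), h⟩
    rintro (⟨b, hb, hij⟩ | ⟨p, hp, hij⟩ | ⟨b, hb, hij⟩)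
    · by_cases hmatched : ∃ p ∈ m, p.1 = b
      · obtain ⟨p, hp, rfl⟩ := hmatched
        exact hmerged hp ((isNext_union_iff (hblocks p hp)).2 (.inl hij))
      · push Not at hmatched
        exact ⟨b, mem_mergeSP.2 (.inl ⟨hb, hmatched⟩), hij⟩
    · exact hmerged hp ((isNext_union_iff (hblocks p hp)).2 (.inr (.inl hij)))
    · by_cases hmatched : ∃ p ∈ m, p.2 = b
      · obtain ⟨p, hp, rfl⟩ := hmatched
        exact hmerged hp ((isNext_union_iff (hblocks p hp)).2 (.inr (.inr hij)))
      · push Not at hmatched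
        exact ⟨b, mem_mergeSP.2 (.inr (.inl ⟨hb, hmatched⟩)), hij⟩

end Merge

section Shift

variable {π π' : Finset (Finset ℕ)} {m : Finset (Finset ℕ × Finset ℕ)} {n i j : ℕ}

theorem pairwiseDisjoint_shiftSP (hπ : (π : Set (Finset ℕ)).PairwiseDisjoint id) (n : ℕ) :
    (shiftSP n π : Set (Finset ℕ)).PairwiseDisjoint id :=
  pairwiseDisjoint_image_image hπ (add_left_injective n).injOn

theorem empty_notMem_shiftSP (hπ : ∅ ∉ π) (n : ℕ) : ∅ ∉ shiftSP n π :=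
  empty_notMem_image_image hπ

theorem follows_shiftSP_iff :
    Follows (shiftSP n π) i j ↔ Relation.Map (Follows π) (· + n) (· + n) i j :=
  follows_image_iff (add_left_strictMono.strictMonoOn _)

theorem bijOn_shiftSP (n : ℕ) (π : Finset (Finset ℕ)) :
    Set.BijOn (fun b : Finset ℕ => b.image (· + n)) π (shiftSP n π) := by
  rw [shiftSP, Finset.coe_image]
  exact (Finset.image_injective (add_left_injective n)).injOn.bijOn_image

theorem IsSP.lt_of_mem_biUnion_shiftSP (hπ : IsSP π) (hπ' : IsSP π') :
    ∀ x ∈ π.biUnion id, ∀ y ∈ (shiftSP (spn π) π').biUnion id, x < y := by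
  rw [hπ.biUnion_eq, hπ'.biUnion_shiftSP]
  intro x hx y hy
  exact (Finset.mem_Icc.1 hx).2.trans_lt (Finset.mem_Icc.1 hy).1

/-- The set partition obtained from `π ⊎ π'` by merging the blocks matched by `m`. In contrast to
`mergeSP`, the matching `m` refers to the blocks of `π'` before they are shifted. -/
def mergeShift (π π' : Finset (Finset ℕ)) (m : Finset (Finset ℕ × Finset ℕ)) :
    Finset (Finset ℕ) :=
  mergeSP π (shiftSP (spn π) π') (m.image fun p => (p.1, p.2.image (· + spn π)))

theorem IsPartialMatching.image_shift (hm : IsPartialMatching π π' m) (n : ℕ) :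
    IsPartialMatching π (shiftSP n π') (m.image fun p => (p.1, p.2.image (· + n))) :=
  (isPartialMatching_image_iff (Set.bijOn_id _) (bijOn_shiftSP n π') hm.1).2 hm

theorem biUnion_mergeShift (hπ : IsSP π) (hπ' : IsSP π') (hm : IsPartialMatching π π' m) :
    (mergeShift π π' m).biUnion id = Finset.Icc 1 (spn π + spn π') := by
  rw [mergeShift, biUnion_mergeSP (hm.image_shift _).1, hπ.biUnion_eq, hπ'.biUnion_shiftSP]
  ext x
  simp only [Finset.mem_union, Finset.mem_Icc]
  lia

theorem spn_mergeShift (hπ : IsSP π) (hπ' : IsSP π') (hm : IsPartialMatching π π' m) :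
    spn (mergeShift π π' m) = spn π + spn π' :=
  spn_eq_of_biUnion_eq (biUnion_mergeShift hπ hπ' hm)

theorem IsSP.mergeShift (hπ : IsSP π) (hπ' : IsSP π') (hm : IsPartialMatching π π' m) :
    IsSP (mergeShift π π' m) := by
  have hdisj : Disjoint (π.biUnion id) ((shiftSP (spn π) π').biUnion id) :=
    Finset.disjoint_left.2 fun x hx hx' => (hπ.lt_of_mem_biUnion_shiftSP hπ' x hx x hx').false
  have hm' := hm.image_shift (spn π)
  exact ⟨empty_notMem_mergeSP hπ.1 (empty_notMem_shiftSP hπ'.1 _) hm'.1,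
    fun b hb c hc => pairwiseDisjoint_mergeSP hπ.pairwiseDisjoint
      (pairwiseDisjoint_shiftSP hπ'.pairwiseDisjoint _) hdisj hm' hb hc,
    _, biUnion_mergeShift hπ hπ' hm⟩

theorem follows_mergeShift_iff (hπ : IsSP π) (hπ' : IsSP π') (hm : IsPartialMatching π π' m) :
    Follows (mergeShift π π' m) i j ↔ Follows π i j ∨
      (∃ p ∈ m, sSup (p.1 : Set ℕ) = i ∧ sInf (p.2 : Set ℕ) + spn π = j) ∨
      Relation.Map (Follows π') (· + spn π) (· + spn π) i j := by
  have hnew (p) (hp : p ∈ m) :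
      IsGreatest (p.1 : Set ℕ) i ∧ IsLeast (p.2.image (· + spn π) : Set ℕ) j ↔
        sSup (p.1 : Set ℕ) = i ∧ sInf (p.2 : Set ℕ) + spn π = j := by
    obtain ⟨hp₁, hp₂⟩ := Finset.mem_product.1 (hm.1 hp)
    have hmin : IsLeast (p.2.image (· + spn π) : Set ℕ) (sInf (p.2 : Set ℕ) + spn π) := by
      rw [Finset.coe_image]
      exact add_left_mono.map_isLeast (isLeast_sInf_coe (hπ'.nonempty_of_mem hp₂))
    rw [(isGreatest_sSup_coe (hπ.nonempty_of_mem hp₁)).isGreatest_iff_eq, hmin.isLeast_iff_eq]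
  rw [mergeShift, follows_mergeSP_iff (hπ.lt_of_mem_biUnion_shiftSP hπ') (hm.image_shift _).1,
    follows_shiftSP_iff, Finset.exists_mem_image]
  exact or_congr_right <| or_congr_left <| exists_congr fun p => and_congr_right (hnew p)

theorem mulfunSP_eq_sum_mergeShift (π π' : SP) :
    mulfunSP π π' = ∑ m ∈ partialMatchings π.1 π'.1, mkSP (mergeShift π.1 π'.1 m) := by
  rw [mulfunSP, matchingsSP_eq,
    sum_partialMatchings_of_bijOn (Set.bijOn_id _) (bijOn_shiftSP (spn π.1) π'.1)]
  rfl

end Shift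

/-- The B-diagram with edge set `E` on `n` vertices, each carrying a single half-edge that is both
outer and inner. Every half-edge has the same number as its vertex. -/
def BD.oneOne (n : ℕ) (E : Finset (ℕ × ℕ)) : BD :=
  ⟨List.replicate n 1, Finset.Icc 1 n, Finset.Icc 1 n, E⟩

namespace BD

variable {n n' k : ℕ} {E E' s : Finset (ℕ × ℕ)} {I : Finset ℕ}

theorem nv_oneOne : (oneOne n E).nv = n := List.length_replicate

theorem omega_oneOne : (oneOne n E).omega = n := by simp [omega, oneOne]

theorem v_oneOne : (oneOne n E).v k = min n k := by
  have hcount : (List.range n).countP (fun i => decide (i < k)) = min n k := by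
    induction n with
    | zero => simp
    | succ n ih => rw [List.range_succ, List.countP_append, ih, List.countP_singleton]; grind
  rw [← hcount, v, oneOne, List.length_replicate]
  refine List.countP_congr fun i hi => ?_
  rw [List.take_replicate, List.sum_replicate, min_eq_left (List.mem_range.1 hi).le]
  simp

theorem v_oneOne_of_mem (hk : k ∈ Finset.Icc 1 n) : (oneOne n E).v k = k :=
  v_oneOne.trans (min_eq_right (Finset.mem_Icc.1 hk).2)

theorem HI_oneOne (hI : I ⊆ Finset.Icc 1 n) : (oneOne n E).HI I = I := by
  calc (oneOne n E).HI I
      = (Finset.Icc 1 n).filter (· ∈ I) := by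
        rw [HI, omega_oneOne]
        exact Finset.filter_congr fun k hk => by rw [v_oneOne_of_mem hk]
    _ = I := by rw [Finset.filter_mem_eq_inter, Finset.inter_eq_right.2 hI]

theorem comp_oneOne : comp (oneOne n E) (oneOne n' E') s =
    oneOne (n + n') (E ∪ s.image (fun p => (p.1, p.2 + n)) ∪
      E'.image fun p => (p.1 + n, p.2 + n)) := by
  have hIcc : Finset.Icc 1 n ∪ (Finset.Icc 1 n').image (· + n) = Finset.Icc 1 (n + n') := by
    rw [Finset.image_add_right_Icc]
    ext x
    simp only [Finset.mem_union, Finset.mem_Icc]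
    lia
  simp only [comp, omega_oneOne]
  simp only [oneOne, hIcc, List.replicate_append_replicate]

theorem isolated_oneOne_iff (hE : E ⊆ Finset.Icc 1 n ×ˢ Finset.Icc 1 n) :
    (oneOne n E).Isolated I ↔ ∀ p ∈ E, p.1 ∈ I ↔ p.2 ∈ I := by
  refine forall₂_congr fun p hp => ?_
  have hp := Finset.mem_product.1 (hE hp)
  rw [v_oneOne_of_mem hp.1, v_oneOne_of_mem hp.2]

theorem lam_sub_oneOne (hI : I ⊆ Finset.Icc 1 n) :
    ((oneOne n E).sub I).lam = List.replicate I.card 1 := by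
  have hcard : ((Finset.range n).filter (· + 1 ∈ I)).card = I.card := by
    refine Finset.card_nbij (· + 1) (fun i hi => (Finset.mem_filter.1 hi).2)
      (add_left_injective 1).injOn fun k hk => ?_
    obtain ⟨hk₁, hkn⟩ := Finset.mem_Icc.1 (hI hk)
    refine ⟨k - 1, ?_, Nat.sub_add_cancel hk₁⟩
    rw [Finset.mem_coe, Finset.mem_filter, Finset.mem_range, Nat.sub_add_cancel hk₁]
    exact ⟨by lia, hk⟩
  refine List.eq_replicate_iff.2 ⟨?_, ?_⟩
  · simp only [sub, oneOne, List.length_map, List.length_replicate]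
    exact hcard
  · simp +contextual [sub, oneOne]

theorem sub_oneOne (hE : E ⊆ Finset.Icc 1 n ×ˢ Finset.Icc 1 n) (hI : I ⊆ Finset.Icc 1 n) :
    (oneOne n E).sub I = oneOne I.card ((E.filter fun p => p.1 ∈ I ∧ p.2 ∈ I).image
      fun p => (rankIn I p.1, rankIn I p.2)) := by
  have hphi : (oneOne n E).phi I = rankIn I := by
    funext k
    rw [phi, HI_oneOne hI, rankIn]
  have hhalf : (Finset.Icc 1 n ∩ (oneOne n E).HI I).image ((oneOne n E).phi I) =
      Finset.Icc 1 I.card := by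
    rw [HI_oneOne hI, Finset.inter_eq_right.2 hI, hphi, image_rankIn]
  have hed : (E.filter fun p => (oneOne n E).v p.1 ∈ I ∧ (oneOne n E).v p.2 ∈ I) =
      E.filter fun p => p.1 ∈ I ∧ p.2 ∈ I := by
    refine Finset.filter_congr fun p hp => ?_
    have hp := Finset.mem_product.1 (hE hp)
    rw [v_oneOne_of_mem hp.1, v_oneOne_of_mem hp.2]
  refine BD.mk.injEq .. |>.mpr ⟨lam_sub_oneOne hI, hhalf, hhalf, ?_⟩
  simp only [hphi]
  exact congrArg _ hed

end BD

section DiagramOfPartition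

variable {π e : Finset (Finset ℕ)} {E : Finset (ℕ × ℕ)} {p : ℕ × ℕ} {i j : ℕ}

theorem bofSP_eq_oneOne (π : Finset (Finset ℕ)) :
    bofSP π = BD.oneOne (spn π) (bofSP π).ed := rfl

theorem nv_bofSP (π : Finset (Finset ℕ)) : (bofSP π).nv = spn π := BD.nv_oneOne

theorem ed_bofSP_subset (π : Finset (Finset ℕ)) :
    (bofSP π).ed ⊆ Finset.Icc 1 (spn π) ×ˢ Finset.Icc 1 (spn π) :=
  Finset.filter_subset _ _

theorem mem_ed_bofSP (hπ : IsSP π) : p ∈ (bofSP π).ed ↔ Follows π p.1 p.2 := by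
  have hmem : Follows π p.1 p.2 → p ∈ Finset.Icc 1 (spn π) ×ˢ Finset.Icc 1 (spn π) := by
    rw [← hπ.biUnion_eq, Finset.mem_product]
    exact Follows.mem_biUnion
  simp only [Follows, isNext_iff_min_filter_lt] at hmem ⊢
  rw [bofSP, Finset.mem_filter]
  exact and_iff_right_of_imp hmem

theorem oneOne_eq_bofSP (hπ : IsSP π) (hE : ∀ p, p ∈ E ↔ Follows π p.1 p.2) :
    BD.oneOne (spn π) E = bofSP π := by
  rw [bofSP_eq_oneOne]
  congr 1
  ext p
  rw [hE, mem_ed_bofSP hπ]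

theorem valid_bofSP (hπ : IsSP π) : (bofSP π).Valid := by
  have hmem {p} (hp : p ∈ (bofSP π).ed) := Finset.mem_product.1 (ed_bofSP_subset π hp)
  have hup : (bofSP π).up ⊆ Finset.Icc 1 (bofSP π).omega := by
    rw [bofSP_eq_oneOne, BD.omega_oneOne]; rfl
  refine ⟨fun x hx => ?_, hup, hup, fun p hp => ⟨(hmem hp).1, (hmem hp).2, ?_⟩,
    fun p hp q hq h => ?_, fun p hp q hq h => ?_⟩
  · rw [List.eq_of_mem_replicate hx]
    exact one_pos
  · rw [bofSP_eq_oneOne, BD.v_oneOne_of_mem (hmem hp).1, BD.v_oneOne_of_mem (hmem hp).2]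
    obtain ⟨b, -, hp⟩ := (mem_ed_bofSP hπ).1 hp
    exact hp.2.2.1
  · rw [mem_ed_bofSP hπ] at hp hq
    exact Prod.ext h (hp.unique_right hπ.pairwiseDisjoint (h ▸ hq))
  · rw [mem_ed_bofSP hπ] at hp hq
    exact Prod.ext (hp.unique_left hπ.pairwiseDisjoint (h ▸ hq)) h

theorem bofSP_injOn : Set.InjOn bofSP {π | IsSP π} := by
  intro π hπ σ hσ h
  have hspn : spn π = spn σ := by
    rw [← nv_bofSP, h, nv_bofSP]
  refine eq_of_forall_follows_iff hπ.pairwiseDisjoint hσ.pairwiseDisjoint hπ.1 hσ.1 ?_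
    fun i j => ?_
  · rw [hπ.biUnion_eq, hσ.biUnion_eq, hspn]
  · rw [← mem_ed_bofSP (p := (i, j)) hπ, ← mem_ed_bofSP (p := (i, j)) hσ, h]

theorem bofSP_empty : bofSP ∅ = BD.eps := rfl

theorem mem_HfUp_bofSP (hπ : IsSP π) :
    i ∈ (bofSP π).HfUp ↔ ∃ b ∈ π, IsGreatest (b : Set ℕ) i := by
  rw [exists_isGreatest_iff_forall_not_follows hπ.pairwiseDisjoint, hπ.biUnion_eq, BD.HfUp,
    Finset.mem_sdiff]
  simp only [Finset.mem_image, mem_ed_bofSP hπ, Prod.exists, exists_and_right, exists_eq_right,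
    not_exists]
  rfl

theorem mem_HfDn_bofSP (hπ : IsSP π) :
    j ∈ (bofSP π).HfDn ↔ ∃ b ∈ π, IsLeast (b : Set ℕ) j := by
  rw [exists_isLeast_iff_forall_not_follows hπ.pairwiseDisjoint, hπ.biUnion_eq, BD.HfDn,
    Finset.mem_sdiff]
  simp only [Finset.mem_image, mem_ed_bofSP hπ, Prod.exists, exists_eq_right, not_exists]
  rfl

theorem bijOn_sSup_HfUp_bofSP (hπ : IsSP π) :
    Set.BijOn (fun b : Finset ℕ => sSup (b : Set ℕ)) π (bofSP π).HfUp := by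
  have hext {b} (hb : b ∈ π) := isGreatest_sSup_coe (hπ.nonempty_of_mem hb)
  refine ⟨fun b hb => (mem_HfUp_bofSP hπ).2 ⟨b, hb, hext hb⟩, fun b hb c hc h => ?_,
    fun i hi => ?_⟩
  · exact hπ.pairwiseDisjoint.elim_finset hb hc _ (hext hb).1 (Set.mem_of_eq_of_mem h (hext hc).1)
  · obtain ⟨b, hb, hib⟩ := (mem_HfUp_bofSP hπ).1 hi
    exact ⟨b, hb, hib.csSup_eq⟩

theorem bijOn_sInf_HfDn_bofSP (hπ : IsSP π) :
    Set.BijOn (fun b : Finset ℕ => sInf (b : Set ℕ)) π (bofSP π).HfDn := by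
  have hext {b} (hb : b ∈ π) := isLeast_sInf_coe (hπ.nonempty_of_mem hb)
  refine ⟨fun b hb => (mem_HfDn_bofSP hπ).2 ⟨b, hb, hext hb⟩, fun b hb c hc h => ?_,
    fun j hj => ?_⟩
  · exact hπ.pairwiseDisjoint.elim_finset hb hc _ (hext hb).1 (Set.mem_of_eq_of_mem h (hext hc).1)
  · obtain ⟨b, hb, hjb⟩ := (mem_HfDn_bofSP hπ).1 hj
    exact ⟨b, hb, hjb.csInf_eq⟩

theorem isolated_bofSP_iff_exists_biUnion_eq (hπ : IsSP π) {I : Finset ℕ} :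
    I ⊆ Finset.Icc 1 (bofSP π).nv ∧ (bofSP π).Isolated I ↔ ∃ e ⊆ π, e.biUnion id = I := by
  rw [exists_biUnion_eq_iff hπ.pairwiseDisjoint, hπ.biUnion_eq, nv_bofSP, bofSP_eq_oneOne,
    BD.isolated_oneOne_iff (ed_bofSP_subset π)]
  simp only [mem_ed_bofSP hπ, Prod.forall]

theorem sub_bofSP_biUnion (hπ : IsSP π) (he : e ⊆ π) :
    (bofSP π).sub (e.biUnion id) = bofSP (stdSP e) := by
  have hdisj : (e : Set (Finset ℕ)).PairwiseDisjoint id := hπ.pairwiseDisjoint.subset he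
  have hI : e.biUnion id ⊆ Finset.Icc 1 (spn π) :=
    hπ.biUnion_eq ▸ Finset.biUnion_subset_biUnion_of_subset_left _ he
  rw [bofSP_eq_oneOne, BD.sub_oneOne (ed_bofSP_subset π) hI, ← spn_stdSP]
  refine oneOne_eq_bofSP (isSP_stdSP hdisj fun h => hπ.1 (he h)) fun p => ?_
  have hstd := follows_image_iff (strictMonoOn_rankIn (e.biUnion id)) (i := p.1) (j := p.2)
  refine Iff.trans ?_ hstd.symm
  simp only [Finset.mem_image, Finset.mem_filter, mem_ed_bofSP hπ, Relation.Map, Prod.exists,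
    ← follows_iff_of_subset hπ.pairwiseDisjoint he, Prod.ext_iff]

/-- The B-diagram `b_π`, bundled with its validity. -/
noncomputable def SP.diagram (π : SP) : BDiagram := ⟨bofSP π.1, valid_bofSP π.2⟩

theorem SP.diagram_injective : Function.Injective SP.diagram := fun π σ h =>
  Subtype.ext (bofSP_injOn π.2 σ.2 (congrArg Subtype.val h))

theorem SP.diagram_eq_eps_iff (π : SP) : π.diagram.1 = BD.eps ↔ π.1 = ∅ :=
  ⟨fun h => bofSP_injOn π.2 empty_isSP (h.trans bofSP_empty.symm),
    fun h => (congrArg bofSP h).trans bofSP_empty⟩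

end DiagramOfPartition

section Product

variable {π π' : Finset (Finset ℕ)} {m : Finset (Finset ℕ × Finset ℕ)}

theorem BD.matchings_eq (G G' : BD) : G.matchings G' = partialMatchings G.HfUp G'.HfDn := by
  classical
  ext s
  rw [BD.matchings, Finset.mem_filter, Finset.mem_powerset, mem_partialMatchings,
    and_iff_right_of_imp fun hs p hp => Finset.mem_product.2 (hs.1 p hp), isPartialMatching_iff]
  rfl

theorem comp_bofSP (hπ : IsSP π) (hπ' : IsSP π') (hm : IsPartialMatching π π' m) :
    BD.comp (bofSP π) (bofSP π') (m.image fun p => (sSup (p.1 : Set ℕ), sInf (p.2 : Set ℕ))) =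
      bofSP (mergeShift π π' m) := by
  rw [bofSP_eq_oneOne π, bofSP_eq_oneOne π', BD.comp_oneOne, ← spn_mergeShift hπ hπ' hm]
  refine oneOne_eq_bofSP (hπ.mergeShift hπ' hm) fun p => ?_
  simp only [follows_mergeShift_iff hπ hπ' hm, Finset.mem_union, Finset.mem_image,
    mem_ed_bofSP hπ, mem_ed_bofSP hπ', or_assoc, Relation.Map, exists_exists_and_eq_and]
  refine or_congr_right (or_congr ?_ ?_)
  · simp only [Prod.ext_iff]
  · simp only [Prod.exists, Prod.ext_iff]

theorem mulfun_diagram_eq_sum_mergeShift (π π' : SP) :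
    mulfun π.diagram π'.diagram =
      ∑ m ∈ partialMatchings π.1 π'.1, mkB (bofSP (mergeShift π.1 π'.1 m)) := by
  rw [mulfun, BD.matchings_eq]
  refine (sum_partialMatchings_of_bijOn (bijOn_sSup_HfUp_bofSP π.2)
    (bijOn_sInf_HfDn_bofSP π'.2) _).trans (Finset.sum_congr rfl fun m hm => ?_)
  rw [← comp_bofSP π.2 π'.2 (mem_partialMatchings.1 hm)]
  rfl

end Product

section LinearExtension

variable {V : Type*} [AddCommMonoid V] [Module ℂ V]

theorem liftW_eq_linearCombination (f : SP → V) : liftW f = Finsupp.linearCombination ℂ f := by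
  ext π
  simp [liftW]

theorem liftB_eq_linearCombination (f : BDiagram → V) :
    liftB f = Finsupp.linearCombination ℂ f := by
  ext A
  simp [liftB]

theorem liftW_single (f : SP → V) (π : SP) : liftW f (Finsupp.single π 1) = f π := by
  rw [liftW_eq_linearCombination, Finsupp.linearCombination_single, one_smul]

theorem liftB_single (f : BDiagram → V) (A : BDiagram) : liftB f (Finsupp.single A 1) = f A := by
  rw [liftB_eq_linearCombination, Finsupp.linearCombination_single, one_smul]

theorem mkB_bofSP (π : SP) : mkB (bofSP π.1) = Finsupp.single π.diagram 1 :=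
  dif_pos (valid_bofSP π.2)

theorem phiW_single (π : SP) : phiW (Finsupp.single π 1) = Finsupp.single π.diagram 1 := by
  rw [phiW, liftW_single, mkB_bofSP]

theorem phiW_mkSP {σ : Finset (Finset ℕ)} (hσ : IsSP σ) : phiW (mkSP σ) = mkB (bofSP σ) := by
  rw [mkSP, dif_pos hσ, phiW, liftW_single]

theorem phiW_eq_lmapDomain : phiW = Finsupp.lmapDomain ℂ ℂ SP.diagram := by
  ext π : 2
  simp [phiW_single]

theorem phiW_injective : Function.Injective phiW := by
  rw [phiW_eq_lmapDomain]
  exact Finsupp.mapDomain_injective SP.diagram_injective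

theorem range_phiW :
    LinearMap.range phiW = Submodule.span ℂ {x : BSpace | ∃ π : SP, x = mkB (bofSP π.1)} := by
  rw [phiW, liftW_eq_linearCombination, Finsupp.range_linearCombination]
  exact congrArg _ (Set.ext fun x => exists_congr fun π => eq_comm)

theorem phiW_unitW : phiW unitW = unitB := by
  rw [unitW, phiW_single]
  rfl

theorem counitB_comp_phiW : counitB ∘ₗ phiW = counitW := by
  classical
  ext π
  simp only [LinearMap.comp_apply, Finsupp.lsingle_apply, phiW_single, counitB, counitW,
    liftB_single, liftW_single, SP.diagram_eq_eps_iff]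

theorem phiW_mulfunSP (π π' : SP) : phiW (mulfunSP π π') = mulfun π.diagram π'.diagram := by
  rw [mulfunSP_eq_sum_mergeShift, mulfun_diagram_eq_sum_mergeShift, map_sum]
  exact Finset.sum_congr rfl fun m hm =>
    phiW_mkSP (π.2.mergeShift π'.2 (mem_partialMatchings.1 hm))

theorem map_phiW_dfunSP (π : SP) :
    TensorProduct.map phiW phiW (dfunSP π) = dfun π.diagram := by
  classical
  have hstd {e} (he : e ⊆ π.1) : phiW (mkSP (stdSP e)) = mkB (π.diagram.1.sub (e.biUnion id)) := by
    rw [SP.diagram, sub_bofSP_biUnion π.2 he,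
      phiW_mkSP (isSP_stdSP (π.2.pairwiseDisjoint.subset he) fun h => π.2.1 (he h))]
  have hcompl {e} (he : e ⊆ π.1) :
      (π.1 \ e).biUnion id = Finset.Icc 1 π.diagram.1.nv \ e.biUnion id := by
    have hnv : π.diagram.1.nv = spn π.1 := nv_bofSP π.1
    rw [biUnion_id_sdiff π.2.pairwiseDisjoint he, π.2.biUnion_eq, hnv]
  have hisolated {I} := isolated_bofSP_iff_exists_biUnion_eq π.2 (I := I)
  rw [dfunSP, dfun, map_sum]
  refine Finset.sum_nbij (fun e => e.biUnion id) (fun e he => ?_)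
    (injOn_biUnion_id_powerset π.2.pairwiseDisjoint π.2.1) (fun I hI => ?_) fun e he => ?_
  · rw [Finset.mem_filter, Finset.mem_powerset]
    exact hisolated.2 ⟨e, Finset.mem_powerset.1 he, rfl⟩
  · rw [Finset.mem_coe, Finset.mem_filter, Finset.mem_powerset] at hI
    obtain ⟨e, he, rfl⟩ := hisolated.1 hI
    exact ⟨e, Finset.mem_coe.2 (Finset.mem_powerset.2 he), rfl⟩
  · have he := Finset.mem_powerset.1 he
    rw [TensorProduct.map_tmul, hstd he, hstd Finset.sdiff_subset, hcompl he]

theorem phiW_mulW (u v : WS) : phiW (mulW u v) = starB (phiW u) (phiW v) := by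
  suffices h : mulW.compr₂ phiW = starB.compl₁₂ phiW phiW from LinearMap.congr_fun₂ h u v
  ext π π' : 4
  simp only [LinearMap.comp_apply, Finsupp.lsingle_apply, LinearMap.compr₂_apply,
    LinearMap.compl₁₂_apply, phiW_single, mulW, starB, liftW_single, liftB_single, phiW_mulfunSP]

theorem map_phiW_deltaW (u : WS) : TensorProduct.map phiW phiW (deltaW u) = deltaL (phiW u) := by
  suffices h : TensorProduct.map phiW phiW ∘ₗ deltaW = deltaL ∘ₗ phiW from LinearMap.congr_fun h u
  ext π : 2
  simp only [LinearMap.comp_apply, Finsupp.lsingle_apply, phiW_single, deltaW, deltaL,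
    liftW_single, liftB_single, map_phiW_dfunSP]

end LinearExtension

/-- `M_π ↦ b_π` extends to an injective morphism of bialgebras
`WSym → ℬ`; consequently the span ℬ¹₁ of the `b_π` is a sub-bialgebra of ℬ
isomorphic to `WSym`. -/
theorem wsym_embeds_in_bspace :
    Function.Injective phiW ∧
    (∀ u v : WS, phiW (mulW u v) = starB (phiW u) (phiW v)) ∧
    phiW unitW = unitB ∧
    (∀ u : WS, TensorProduct.map phiW phiW (deltaW u) = deltaL (phiW u)) ∧
    (∀ u : WS, counitB (phiW u) = counitW u) ∧
    LinearMap.range phiW = Submodule.span ℂ {x : BSpace | ∃ π : SP, x = mkB (bofSP π.1)} :=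
  ⟨phiW_injective, phiW_mulW, phiW_unitW, map_phiW_deltaW,
    LinearMap.congr_fun counitB_comp_phiW, range_phiW⟩
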